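/- arXiv:2308.10394 — 8 statements merged into one kernel-verified Lean document; each statement's English description precedes it below -/
import Mathlib

section
/- For every subgroup G of the symmetric group S_n and every block partition 𝓑 for G, the automorphism group Aut(U_{G⋌𝓑}) of the ordered set U_{G⋌𝓑} is isomorphic to G via the restriction map Ψ ↦ Ψ|_T; that is, every automorphism Ψ of U_{G⋌𝓑} maps T onto itself, the map Ψ ↦ Ψ|_T is an injective group homomorphism from Aut(U_{G⋌𝓑}) into G, and every σ ∈ G arises as Ψ|_T for some automorphism Ψ. -/
/-!
An automorphism `Ψ` preserves the distance `colevel` of a point from the top of `U_{G⋌𝓑}`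
(`colevel_map`), hence the levels `T`, `⋃ D^μ`, `F_up ∪ G` and `F_low`. Points of `G` are
minimal and the `u_j` are not, so each of the five kinds of points is preserved. The fence is
rigid: `ℓ_1` is the only lower fence element with a single upper neighbour, and working upwards
from it every fence element is fixed (`fence_fixed`).

By the partition property there is, for `θ ∈ G` and `j ∈ T`, exactly one cell above both `u_j` and
`θ` (`cellOf`), and it lies below `θ(j)`. If `Ψ θ = θ'`, then `Ψ` maps this cell to the one for
`θ'` and `j`, so `Ψ (θ(j)) = θ'(j)`. With `θ = 1` this says that `Ψ|_T` is the element
`Ψ 1` of `G`, and for general `θ` it gives `θ' = Ψ|_T ∘ θ`, so `Ψ` is determined by `Ψ|_T`.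
Conversely `σ ∈ G` acts on `U_{G⋌𝓑}` by left composition (`actIso`).
-/

/-- The set of restrictions `θ|_B` (as functions `B → Fin n`) of elements `θ ∈ G`
to blocks `B ∈ 𝓑`, i.e. `⋃_{B ∈ 𝓑} G|_B`. -/
def Restr (n : ℕ) (G : Subgroup (Equiv.Perm (Fin n))) (𝓑 : Set (Set (Fin n))) :
    Set ((B : Set (Fin n)) × (B → Fin n)) :=
  { p | p.1 ∈ 𝓑 ∧ ∃ θ ∈ G, p.2 = fun x => θ x.1 }

/-- The underlying set of the ordered set `U_{G⋌𝓑}`: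
the fence `F = {ℓ_1,u_1,…,ℓ_n,u_n}` (constructors `low`, `up`), the copy of `G`
(constructor `grp`), the sets `D^μ = dom(μ) × {μ}` (constructor `cell`), and the
copy of `T = {1,…,n}` (constructor `pt`). -/
inductive UPt (n : ℕ) (G : Subgroup (Equiv.Perm (Fin n))) (𝓑 : Set (Set (Fin n))) where
  | low : Fin n → UPt n G 𝓑
  | up : Fin n → UPt n G 𝓑
  | grp : G → UPt n G 𝓑
  | cell : (μ : Restr n G 𝓑) → (j : μ.1.1) → UPt n G 𝓑
  | pt : Fin n → UPt n G 𝓑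

/-- The generating strict comparabilities of `U_{G⋌𝓑}`:
`ℓ_i < u_i`, `ℓ_{i+1} < u_i`, `u_j < (j,μ)`, `(j,μ) < μ(j)`, and `θ < (j, θ|_B)`. -/
inductive UStep (n : ℕ) (G : Subgroup (Equiv.Perm (Fin n))) (𝓑 : Set (Set (Fin n))) :
    UPt n G 𝓑 → UPt n G 𝓑 → Prop where
  | fence_eq (i : Fin n) : UStep n G 𝓑 (.low i) (.up i)
  | fence_succ (i j : Fin n) (h : (j : ℕ) = (i : ℕ) + 1) : UStep n G 𝓑 (.low j) (.up i)
  | up_cell (μ : Restr n G 𝓑) (j : μ.1.1) : UStep n G 𝓑 (.up j.1) (.cell μ j)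
  | cell_pt (μ : Restr n G 𝓑) (j : μ.1.1) : UStep n G 𝓑 (.cell μ j) (.pt (μ.1.2 j))
  | grp_cell (θ : G) (μ : Restr n G 𝓑) (j : μ.1.1)
      (h : ∀ x : μ.1.1, μ.1.2 x = (θ : Equiv.Perm (Fin n)) x.1) :
      UStep n G 𝓑 (.grp θ) (.cell μ j)

/-- Rank function used to prove antisymmetry of the generated order. -/
def UPt.rank {n : ℕ} {G : Subgroup (Equiv.Perm (Fin n))} {𝓑 : Set (Set (Fin n))} :
    UPt n G 𝓑 → ℕ
  | .low _ => 0
  | .grp _ => 0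
  | .up _ => 1
  | .cell _ _ => 2
  | .pt _ => 3

theorem UStep.rank_lt {n : ℕ} {G : Subgroup (Equiv.Perm (Fin n))} {𝓑 : Set (Set (Fin n))}
    {x y : UPt n G 𝓑} (h : UStep n G 𝓑 x y) : x.rank < y.rank := by
  cases h <;> simp [UPt.rank]

/-- The order of `U_{G⋌𝓑}`: the reflexive-transitive closure of the generating
comparabilities. -/
instance UPt.instPartialOrder (n : ℕ) (G : Subgroup (Equiv.Perm (Fin n)))
    (𝓑 : Set (Set (Fin n))) : PartialOrder (UPt n G 𝓑) where
  le := Relation.ReflTransGen (UStep n G 𝓑)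
  le_refl _ := Relation.ReflTransGen.refl
  le_trans _ _ _ := Relation.ReflTransGen.trans
  le_antisymm a b hab hba := by
    have mono : ∀ {x y : UPt n G 𝓑}, Relation.ReflTransGen (UStep n G 𝓑) x y →
        x.rank ≤ y.rank := by
      intro x y h
      induction h with
      | refl => exact le_rfl
      | tail _ h2 ih => exact ih.trans h2.rank_lt.le
    rcases hab.cases_head with h | ⟨c, hc, hcb⟩
    · exact h
    rcases hba.cases_head with h | ⟨d, hd, hda⟩
    · exact h.symm
    have h1 := hc.rank_lt
    have h2 := mono hcb
    have h3 := hd.rank_lt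
    have h4 := mono hda
    omega

/-- `B` is a block for `G`: for every `σ ∈ G`, `σ[B] ∩ B ≠ ∅` implies `σ[B] = B`. -/
def IsBlockOf (n : ℕ) (G : Subgroup (Equiv.Perm (Fin n))) (B : Set (Fin n)) : Prop :=
  ∀ σ ∈ G, ((σ : Equiv.Perm (Fin n)) '' B ∩ B).Nonempty → (σ : Equiv.Perm (Fin n)) '' B = B

/-- A block partition `𝓑 = ⋃_{j=1}^ℓ G·B_j` for `G` with orbit cut `{B_1,…,B_ℓ}`
(the `B_j` are the `cut j`): the `B_j` are nonempty blocks, the family of all images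
`σ[B_i]` (`σ ∈ G`) partitions `{1,…,n}`, and distinct members of the orbit cut lie in
distinct `G`-orbits of blocks. -/
structure BlockPartition (n : ℕ) (G : Subgroup (Equiv.Perm (Fin n))) where
  ℓ : ℕ
  cut : Fin ℓ → Set (Fin n)
  nonempty_cut : ∀ i, (cut i).Nonempty
  isBlock_cut : ∀ i, IsBlockOf n G (cut i)
  partitions : ∀ x : Fin n,
    ∃! C : Set (Fin n), (∃ i, ∃ σ ∈ G, (σ : Equiv.Perm (Fin n)) '' cut i = C) ∧ x ∈ C
  cut_distinct_orbits : ∀ i j : Fin ℓ, ∀ σ ∈ G,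
    (σ : Equiv.Perm (Fin n)) '' cut i = cut j → i = j

/-- The block partition `𝓑 = ⋃_{j=1}^ℓ G·B_j` as a set of subsets of `{1,…,n}`. -/
def BlockPartition.blocks {n : ℕ} {G : Subgroup (Equiv.Perm (Fin n))}
    (P : BlockPartition n G) : Set (Set (Fin n)) :=
  { C | ∃ i, ∃ σ ∈ G, (σ : Equiv.Perm (Fin n)) '' P.cut i = C }

/-- Composition `σ ∘ μ` of a restriction `μ = θ|_B` with `σ ∈ G`; this is the
restriction `(σθ)|_B`. -/
def Restr.comp {n : ℕ} {G : Subgroup (Equiv.Perm (Fin n))} {𝓑 : Set (Set (Fin n))}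
    (σ : G) (μ : Restr n G 𝓑) : Restr n G 𝓑 :=
  ⟨⟨μ.1.1, fun x => (σ : Equiv.Perm (Fin n)) (μ.1.2 x)⟩, by
    obtain ⟨hB, θ, hθ, hf⟩ := μ.2
    refine ⟨hB, (σ : Equiv.Perm (Fin n)) * θ, mul_mem σ.2 hθ, ?_⟩
    funext x
    simp [hf]⟩

/-! ### The order relation between the kinds of points -/

section

variable {n : ℕ} {G : Subgroup (Equiv.Perm (Fin n))} {𝓑 : Set (Set (Fin n))}

/-- The length of a longest chain starting at a given point (when `𝓑` partitions `T` and
`n ≥ 1`). Unlike the rank it separates `ℓ_i` from the elements of `G`. -/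
def UPt.colevel : UPt n G 𝓑 → ℕ
  | .low _ => 3
  | .grp _ => 2
  | .up _ => 2
  | .cell _ _ => 1
  | .pt _ => 0

theorem UStep.le {x y : UPt n G 𝓑} (h : UStep n G 𝓑 x y) : x ≤ y :=
  Relation.ReflTransGen.single h

theorem UStep.lt {x y : UPt n G 𝓑} (h : UStep n G 𝓑 x y) : x < y :=
  lt_of_le_of_ne h.le fun e => by
    have := h.rank_lt
    rw [e] at this
    exact lt_irrefl _ this

theorem UStep.colevel_lt {x y : UPt n G 𝓑} (h : UStep n G 𝓑 x y) : y.colevel < x.colevel := by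
  cases h <;> simp [UPt.colevel]

theorem UPt.le_cases {x y : UPt n G 𝓑} (h : x ≤ y) : x = y ∨ ∃ c, UStep n G 𝓑 x c ∧ c ≤ y := by
  rcases Relation.ReflTransGen.cases_head h with h | ⟨c, h1, h2⟩
  · exact Or.inl h
  · exact Or.inr ⟨c, h1, h2⟩

theorem UPt.colevel_anti {x y : UPt n G 𝓑} (h : x ≤ y) : y.colevel ≤ x.colevel := by
  change Relation.ReflTransGen (UStep n G 𝓑) x y at h
  induction h with
  | refl => exact le_rfl
  | tail _ h2 ih => exact h2.colevel_lt.le.trans ih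

theorem UPt.colevel_lt {x y : UPt n G 𝓑} (h : x < y) : y.colevel < x.colevel := by
  rcases UPt.le_cases h.le with e | ⟨c, h1, h2⟩
  · exact absurd e h.ne
  · exact (UPt.colevel_anti h2).trans_lt h1.colevel_lt

theorem UPt.eq_of_colevel {x y : UPt n G 𝓑} (h : x ≤ y) (e : x.colevel ≤ y.colevel) : x = y := by
  by_contra hne
  exact absurd (UPt.colevel_lt (lt_of_le_of_ne h hne)) (by omega)

theorem UPt.step_of_le {x y : UPt n G 𝓑} (h : x ≤ y) (e : x.colevel = y.colevel + 1) :
    UStep n G 𝓑 x y := by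
  rcases UPt.le_cases h with rfl | ⟨c, h1, h2⟩
  · omega
  · have := h1.colevel_lt
    obtain rfl := UPt.eq_of_colevel h2 (by omega)
    exact h1

theorem low_le_up {i j : Fin n} :
    (UPt.low i : UPt n G 𝓑) ≤ .up j ↔ i = j ∨ (i : ℕ) = (j : ℕ) + 1 := by
  constructor
  · intro h
    cases UPt.step_of_le h rfl with
    | fence_eq => exact Or.inl rfl
    | fence_succ _ _ h => exact Or.inr h
  · rintro (rfl | h)
    · exact (UStep.fence_eq _).le
    · exact (UStep.fence_succ _ _ h).le

theorem up_le_cell {i : Fin n} {μ : Restr n G 𝓑} {j : μ.1.1}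
    (h : (UPt.up i : UPt n G 𝓑) ≤ .cell μ j) : i = j.1 := by
  cases UPt.step_of_le h rfl
  rfl

theorem cell_le_pt {i : Fin n} {μ : Restr n G 𝓑} {j : μ.1.1}
    (h : (UPt.cell μ j : UPt n G 𝓑) ≤ .pt i) : i = μ.1.2 j := by
  cases UPt.step_of_le h rfl
  rfl

theorem grp_le_cell {θ : G} {μ : Restr n G 𝓑} {j : μ.1.1}
    (h : (UPt.grp θ : UPt n G 𝓑) ≤ .cell μ j) :
    ∀ x : μ.1.1, μ.1.2 x = (θ : Equiv.Perm (Fin n)) x.1 := by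
  cases UPt.step_of_le h rfl
  assumption

theorem not_lt_grp {θ : G} {x : UPt n G 𝓑} : ¬ x < .grp θ := by
  intro h
  have key : ∀ y : UPt n G 𝓑, x ≤ y → y = .grp θ → x = y := by
    intro y hy
    change Relation.ReflTransGen (UStep n G 𝓑) x y at hy
    rintro rfl
    rcases Relation.ReflTransGen.cases_tail hy with h | ⟨c, _, h⟩
    · exact h.symm
    · cases h
  exact h.ne (key _ h.le rfl)

/-! ### The action of `G` by left composition -/

/-- Left composition with `σ` on `G`, on the restrictions and on `T`; the fence is fixed. -/
def act (σ : G) : UPt n G 𝓑 → UPt n G 𝓑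
  | .low i => .low i
  | .up i => .up i
  | .grp θ => .grp (σ * θ)
  | .cell μ j => .cell (Restr.comp σ μ) j
  | .pt i => .pt ((σ : Equiv.Perm (Fin n)) i)

theorem act_mul (σ τ : G) (x : UPt n G 𝓑) : act σ (act τ x) = act (σ * τ) x := by
  cases x <;> simp [act, Restr.comp, mul_assoc]

theorem act_one (x : UPt n G 𝓑) : act 1 x = x := by
  cases x <;> simp [act, Restr.comp]

theorem act_mono (σ : G) : Monotone (act σ : UPt n G 𝓑 → UPt n G 𝓑) := by
  intro x y h
  refine Relation.ReflTransGen.lift (act σ) ?_ _ _ h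
  intro a b hab
  cases hab with
  | fence_eq i => exact .fence_eq i
  | fence_succ i j h => exact .fence_succ i j h
  | up_cell μ j => exact .up_cell (Restr.comp σ μ) j
  | cell_pt μ j => exact .cell_pt (Restr.comp σ μ) j
  | grp_cell θ μ j h =>
    refine .grp_cell (σ * θ) (Restr.comp σ μ) j fun x => ?_
    have := h x
    simp [Restr.comp, this]

/-- The action of `σ` as an automorphism of `U_{G⋌𝓑}`. -/
def actIso (σ : G) : UPt n G 𝓑 ≃o UPt n G 𝓑 where
  toFun := act σ
  invFun := act σ⁻¹
  left_inv x := by rw [act_mul, inv_mul_cancel, act_one]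
  right_inv x := by rw [act_mul, mul_inv_cancel, act_one]
  map_rel_iff' {a b} := by
    refine ⟨fun h => ?_, fun h => act_mono σ h⟩
    have := act_mono σ⁻¹ h
    simpa [act_mul, act_one] using this

/-! ### The cell above `u_j` and `θ` -/

variable (P : BlockPartition n G)

/-- The unique cell above both `u_j` and `θ`, namely `(j, θ|_B)` with `B` the block of `j`. -/
noncomputable def cellOf (θ : G) (j : Fin n) : UPt n G P.blocks :=
  .cell ⟨⟨(P.partitions j).choose, fun x => (θ : Equiv.Perm (Fin n)) x.1⟩,
    (P.partitions j).choose_spec.1.1, θ, θ.2, rfl⟩ ⟨j, (P.partitions j).choose_spec.1.2⟩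

theorem up_lt_cellOf (θ : G) (j : Fin n) : .up j < cellOf P θ j :=
  UStep.lt (.up_cell _ ⟨j, (P.partitions j).choose_spec.1.2⟩)

theorem grp_lt_cellOf (θ : G) (j : Fin n) : .grp θ < cellOf P θ j :=
  UStep.lt (.grp_cell _ _ _ fun _ => rfl)

theorem cellOf_lt_pt (θ : G) (j : Fin n) :
    cellOf P θ j < .pt ((θ : Equiv.Perm (Fin n)) j) :=
  UStep.lt (.cell_pt _ _)

theorem cellOf_le_pt (θ : G) (j k : Fin n) (h : cellOf P θ j ≤ .pt k) :
    k = (θ : Equiv.Perm (Fin n)) j :=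
  cell_le_pt h

theorem cell_eq_cellOf (θ : G) (μ : Restr n G P.blocks) (j : μ.1.1)
    (h : ∀ x : μ.1.1, μ.1.2 x = (θ : Equiv.Perm (Fin n)) x.1) :
    UPt.cell μ j = cellOf P θ j.1 := by
  obtain ⟨⟨B, g⟩, hμ⟩ := μ
  obtain ⟨j, hj⟩ := j
  obtain rfl : B = (P.partitions j).choose :=
    (P.partitions j).choose_spec.2 B ⟨hμ.1, hj⟩
  obtain rfl : g = fun x => (θ : Equiv.Perm (Fin n)) x.1 := funext h
  rfl

theorem exists_cellOf (μ : Restr n G P.blocks) (j : μ.1.1) :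
    ∃ (θ : G) (i : Fin n), UPt.cell μ j = cellOf P θ i := by
  obtain ⟨θ, hθ, h⟩ := μ.2.2
  exact ⟨⟨θ, hθ⟩, j.1, cell_eq_cellOf P _ μ j fun x => by rw [h]⟩

/-! ### Automorphisms -/

variable {P}

theorem exists_colevel_pred (hn : 1 ≤ n) (x : UPt n G P.blocks) (k : ℕ) (h : x.colevel = k + 1) :
    ∃ y, x < y ∧ y.colevel = k := by
  cases x with
  | low i => exact ⟨.up i, (UStep.fence_eq i).lt, Nat.succ.inj h⟩
  | up i => exact ⟨_, up_lt_cellOf P 1 i, Nat.succ.inj h⟩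
  | grp θ => exact ⟨_, grp_lt_cellOf P θ ⟨0, hn⟩, Nat.succ.inj h⟩
  | cell μ j => exact ⟨_, (UStep.cell_pt μ j).lt, Nat.succ.inj h⟩
  | pt i => simp [UPt.colevel] at h

theorem le_colevel_map (hn : 1 ≤ n) (Ψ : UPt n G P.blocks ≃o UPt n G P.blocks) (k : ℕ) :
    ∀ x : UPt n G P.blocks, x.colevel = k → k ≤ (Ψ x).colevel := by
  induction k with
  | zero => intros; exact Nat.zero_le _
  | succ k ih =>
    intro x hx
    obtain ⟨y, hy, hk⟩ := exists_colevel_pred hn x k hx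
    exact (ih y hk).trans_lt (UPt.colevel_lt (Ψ.lt_iff_lt.2 hy))

theorem colevel_map (hn : 1 ≤ n) (Ψ : UPt n G P.blocks ≃o UPt n G P.blocks)
    (x : UPt n G P.blocks) : (Ψ x).colevel = x.colevel := by
  refine le_antisymm ?_ (le_colevel_map hn Ψ _ x rfl)
  simpa using le_colevel_map hn Ψ.symm _ (Ψ x) rfl

theorem map_pt (hn : 1 ≤ n) (Ψ : UPt n G P.blocks ≃o UPt n G P.blocks) (i : Fin n) :
    ∃ j, Ψ (.pt i) = .pt j := by
  have := colevel_map hn Ψ (.pt i)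
  cases h : Ψ (.pt i) <;> simp [h, UPt.colevel] at this ⊢

theorem map_low (hn : 1 ≤ n) (Ψ : UPt n G P.blocks ≃o UPt n G P.blocks) (i : Fin n) :
    ∃ j, Ψ (.low i) = .low j := by
  have := colevel_map hn Ψ (.low i)
  cases h : Ψ (.low i) <;> simp [h, UPt.colevel] at this ⊢

theorem map_up (hn : 1 ≤ n) (Ψ : UPt n G P.blocks ≃o UPt n G P.blocks) (i : Fin n) :
    ∃ j, Ψ (.up i) = .up j := by
  have := colevel_map hn Ψ (.up i)
  have hlt : Ψ (.low i) < Ψ (.up i) := Ψ.lt_iff_lt.2 (UStep.fence_eq i).lt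
  cases h : Ψ (.up i) with
  | grp θ => rw [h] at hlt; exact absurd hlt not_lt_grp
  | _ => simp [h, UPt.colevel] at this ⊢

theorem map_grp (hn : 1 ≤ n) (Ψ : UPt n G P.blocks ≃o UPt n G P.blocks) (θ : G) :
    ∃ θ', Ψ (.grp θ) = .grp θ' := by
  have := colevel_map hn Ψ (.grp θ)
  cases h : Ψ (.grp θ) with
  | up i =>
    -- `Ψ⁻¹` would send `u_i` to an element of `G`
    obtain ⟨j, hj⟩ := map_up hn Ψ.symm i
    rw [← h] at hj
    simp at hj
  | _ => simp [h, UPt.colevel] at this ⊢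

theorem fence_fixed (hn : 1 ≤ n) (Ψ : UPt n G P.blocks ≃o UPt n G P.blocks) (k : ℕ) :
    ∀ hk : k < n, Ψ (.low ⟨k, hk⟩) = .low ⟨k, hk⟩ ∧ Ψ (.up ⟨k, hk⟩) = .up ⟨k, hk⟩ := by
  choose a ha using map_low hn Ψ
  choose b hb using map_up hn Ψ
  have hab : ∀ i j : Fin n, (a i = b j ∨ (a i : ℕ) = (b j : ℕ) + 1) ↔
      (i = j ∨ (i : ℕ) = (j : ℕ) + 1) := by
    intro i j
    rw [← low_le_up (G := G) (𝓑 := P.blocks), ← low_le_up (G := G) (𝓑 := P.blocks),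
      ← ha, ← hb, Ψ.le_iff_le]
  have ainj : Function.Injective a := fun i j h => by
    have : Ψ (.low i) = Ψ (.low j) := by rw [ha, ha, h]
    simpa using this
  have binj : Function.Injective b := fun i j h => by
    have : Ψ (.up i) = Ψ (.up j) := by rw [hb, hb, h]
    simpa using this
  have bsurj : Function.Surjective b := Finite.surjective_of_injective binj
  suffices H : ∀ hk : k < n, a ⟨k, hk⟩ = ⟨k, hk⟩ ∧ b ⟨k, hk⟩ = ⟨k, hk⟩ by
    intro hk
    rw [ha, hb, (H hk).1, (H hk).2]
    exact ⟨rfl, rfl⟩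
  induction k with
  | zero =>
    intro hk
    have a0 : a ⟨0, hk⟩ = ⟨0, hk⟩ := by
      by_contra hne
      have hpos : (a ⟨0, hk⟩ : ℕ) ≠ 0 := fun h => hne (Fin.ext h)
      -- both upper neighbours of `Ψ ℓ_1` would be images of `u_1`
      obtain ⟨p, hp⟩ := bsurj (a ⟨0, hk⟩)
      obtain ⟨q, hq⟩ := bsurj ⟨(a ⟨0, hk⟩ : ℕ) - 1, by omega⟩
      have h1 := (hab ⟨0, hk⟩ p).1 (Or.inl hp.symm)
      have h2 := (hab ⟨0, hk⟩ q).1 (Or.inr (by rw [hq]; simp; omega))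
      have h3 : p = q := by
        rw [Fin.ext_iff] at h1 h2 ⊢
        simp at h1 h2
        omega
      rw [h3, hq, Fin.ext_iff] at hp
      simp at hp
      omega
    refine ⟨a0, ?_⟩
    have h := (hab ⟨0, hk⟩ ⟨0, hk⟩).2 (Or.inl rfl)
    rw [a0, Fin.ext_iff] at h
    apply Fin.ext
    simp at h ⊢
    omega
  | succ k ih =>
    intro hk
    obtain ⟨iha, ihb⟩ := ih (by omega)
    have a1 : a ⟨k + 1, hk⟩ = ⟨k + 1, hk⟩ := by
      have h := (hab ⟨k + 1, hk⟩ ⟨k, by omega⟩).2 (Or.inr rfl)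
      rw [ihb] at h
      rcases h with h | h
      · rw [← iha] at h
        have := ainj h
        simp at this
      · exact Fin.ext h
    refine ⟨a1, ?_⟩
    have h := (hab ⟨k + 1, hk⟩ ⟨k + 1, hk⟩).2 (Or.inl rfl)
    rw [a1] at h
    rcases h with h | h
    · exact h.symm
    · have h' : b ⟨k + 1, hk⟩ = b ⟨k, by omega⟩ := by
        rw [ihb]
        apply Fin.ext
        simp at h ⊢
        omega
      have := binj h'
      simp at this

theorem map_cellOf (hn : 1 ≤ n) (Ψ : UPt n G P.blocks ≃o UPt n G P.blocks) {θ θ' : G}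
    (h : Ψ (.grp θ) = .grp θ') (j : Fin n) : Ψ (cellOf P θ j) = cellOf P θ' j := by
  have h1 : Ψ (.up j) ≤ Ψ (cellOf P θ j) := Ψ.le_iff_le.2 (up_lt_cellOf P θ j).le
  have h2 : Ψ (.grp θ) ≤ Ψ (cellOf P θ j) := Ψ.le_iff_le.2 (grp_lt_cellOf P θ j).le
  have h3 := colevel_map hn Ψ (cellOf P θ j)
  rw [h] at h2
  rw [(fence_fixed hn Ψ j.1 j.2).2] at h1
  cases hc : Ψ (cellOf P θ j) with
  | cell μ i =>
    rw [hc] at h1 h2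
    obtain rfl : j = i.1 := up_le_cell h1
    exact cell_eq_cellOf P θ' μ i (grp_le_cell h2)
  | _ =>
    rw [hc] at h3
    simp [UPt.colevel, cellOf] at h3

theorem map_pt_of_grp (hn : 1 ≤ n) (Ψ : UPt n G P.blocks ≃o UPt n G P.blocks) {θ θ' : G}
    (h : Ψ (.grp θ) = .grp θ') (j : Fin n) :
    Ψ (.pt ((θ : Equiv.Perm (Fin n)) j)) = .pt ((θ' : Equiv.Perm (Fin n)) j) := by
  obtain ⟨k, hk⟩ := map_pt hn Ψ ((θ : Equiv.Perm (Fin n)) j)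
  have h1 : Ψ (cellOf P θ j) ≤ Ψ (.pt ((θ : Equiv.Perm (Fin n)) j)) :=
    Ψ.le_iff_le.2 (cellOf_lt_pt P θ j).le
  rw [map_cellOf hn Ψ h, hk] at h1
  rw [hk, cellOf_le_pt P _ _ _ h1]

/-- The image of `θ ∈ G` is forced by the restriction of `Ψ` to `T`. -/
theorem map_grp_of_pt (hn : 1 ≤ n) (Ψ : UPt n G P.blocks ≃o UPt n G P.blocks) (σ : G)
    (hσ : ∀ j, Ψ (.pt j) = .pt ((σ : Equiv.Perm (Fin n)) j)) (θ : G) :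
    Ψ (.grp θ) = .grp (σ * θ) := by
  obtain ⟨θ', h⟩ := map_grp hn Ψ θ
  rw [h]
  congr 1
  ext j : 2
  have := map_pt_of_grp hn Ψ h j
  rw [hσ] at this
  simpa using this.symm

theorem eq_actIso (hn : 1 ≤ n) (Ψ : UPt n G P.blocks ≃o UPt n G P.blocks) (σ : G)
    (hσ : ∀ j, Ψ (.pt j) = .pt ((σ : Equiv.Perm (Fin n)) j)) : Ψ = actIso σ := by
  have hσ' : ∀ j, (actIso σ : UPt n G P.blocks ≃o UPt n G P.blocks) (.pt j) =
      .pt ((σ : Equiv.Perm (Fin n)) j) := fun _ => rfl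
  ext x
  cases x with
  | low i => rw [(fence_fixed hn Ψ i.1 i.2).1]; rfl
  | up i => rw [(fence_fixed hn Ψ i.1 i.2).2]; rfl
  | grp θ => rw [map_grp_of_pt hn Ψ σ hσ]; rfl
  | cell μ j =>
    obtain ⟨θ, i, h⟩ := exists_cellOf P μ j
    rw [h, map_cellOf hn Ψ (map_grp_of_pt hn Ψ σ hσ θ),
      map_cellOf hn _ (map_grp_of_pt hn _ σ hσ' θ)]
  | pt i => rw [hσ]; rfl

end

/-- For every subgroup `G` of `S_n` and every block partition `𝓑` for `G`,
the automorphism group of the ordered set `U_{G⋌𝓑}` is isomorphic to `G` via `Ψ ↦ Ψ|_T`: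
every automorphism maps `T` onto itself, the restriction map is an injective group
homomorphism into `G`, and every `σ ∈ G` arises as such a restriction. -/
theorem representation_by_blocks (n : ℕ) (hn : 1 ≤ n) (G : Subgroup (Equiv.Perm (Fin n)))
    (P : BlockPartition n G) :
    (∀ Ψ : UPt n G P.blocks ≃o UPt n G P.blocks,
      (⇑Ψ) '' (Set.range (UPt.pt : Fin n → UPt n G P.blocks)) =
        Set.range (UPt.pt : Fin n → UPt n G P.blocks)) ∧
    ∃ f : (UPt n G P.blocks ≃o UPt n G P.blocks) → G,
      (∀ (Ψ : UPt n G P.blocks ≃o UPt n G P.blocks) (j : Fin n),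
        Ψ (UPt.pt j) = UPt.pt ((f Ψ : Equiv.Perm (Fin n)) j)) ∧
      (∀ Ψ Φ : UPt n G P.blocks ≃o UPt n G P.blocks, f (Ψ.trans Φ) = f Φ * f Ψ) ∧
      Function.Injective f ∧
      Function.Surjective f := by
  refine ⟨fun Ψ => ?_, ?_⟩
  · ext x
    constructor
    · rintro ⟨_, ⟨i, rfl⟩, rfl⟩
      obtain ⟨j, hj⟩ := map_pt hn Ψ i
      exact ⟨j, hj.symm⟩
    · rintro ⟨i, rfl⟩
      obtain ⟨j, hj⟩ := map_pt hn Ψ.symm i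
      exact ⟨.pt j, ⟨j, rfl⟩, by rw [← hj, OrderIso.apply_symm_apply]⟩
  · choose f hf using fun Ψ : UPt n G P.blocks ≃o UPt n G P.blocks => map_grp hn Ψ 1
    have hpt : ∀ (Ψ : UPt n G P.blocks ≃o UPt n G P.blocks) (j : Fin n),
        Ψ (UPt.pt j) = UPt.pt ((f Ψ : Equiv.Perm (Fin n)) j) :=
      fun Ψ j => map_pt_of_grp hn Ψ (hf Ψ) j
    refine ⟨f, hpt, fun Ψ Φ => ?_, fun Ψ Φ h => ?_, fun σ => ⟨actIso σ, ?_⟩⟩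
    · have h := hf (Ψ.trans Φ)
      rw [OrderIso.trans_apply, hf Ψ, map_grp_of_pt hn Φ _ (hpt Φ)] at h
      simpa using h.symm
    · rw [eq_actIso hn Ψ _ (hpt Ψ), eq_actIso hn Φ _ (hpt Φ), h]
    · have h := hf (actIso σ)
      rw [map_grp_of_pt hn _ σ fun _ => rfl] at h
      simpa using h.symm
end

section
/- For every subgroup G of S_n and every block partition 𝓑 for G with orbit cut {B_1,…,B_ℓ}, the cardinality of the ordered set U_{G⋌𝓑} equals |G| + 3n + Σ_{i=1}^{ℓ} |B_i| · m_i² · |G↺B_i|, where m_i := |G·B_i| and G↺B_i := {σ|_{B_i} : σ ∈ G, σ[B_i] = B_i}. -/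
/-- The set `G|_B` of restrictions to `B` of the elements of `G`. -/
def RestrOn {n : ℕ} (G : Subgroup (Equiv.Perm (Fin n))) (B : Set (Fin n)) : Set (B → Fin n) :=
  {f | ∃ θ ∈ G, f = fun x => θ x.1}

/-- The orbit `G·B` of a set `B` under `G`. -/
def SetOrbit {n : ℕ} (G : Subgroup (Equiv.Perm (Fin n))) (B : Set (Fin n)) : Set (Set (Fin n)) :=
  {C | ∃ σ ∈ G, (σ : Equiv.Perm (Fin n)) '' B = C}

/-- The set `G↺B` of restrictions to `B` of the elements of `G` that map `B` onto itself. -/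
def SelfRestr {n : ℕ} (G : Subgroup (Equiv.Perm (Fin n))) (B : Set (Fin n)) : Set (B → Fin n) :=
  {f | ∃ σ ∈ G, (σ : Equiv.Perm (Fin n)) '' B = B ∧ f = fun x => σ x.1}

/-- Precomposition with `σ` identifies the restrictions to `σ[B]` with the restrictions to `B`. -/
theorem card_restrOn_image {n : ℕ} (G : Subgroup (Equiv.Perm (Fin n))) (B : Set (Fin n))
    (σ : Equiv.Perm (Fin n)) (hσ : σ ∈ G) :
    Nat.card (RestrOn G (σ '' B)) = Nat.card (RestrOn G B) := by
  refine Nat.card_eq_of_bijective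
    (fun f => ⟨fun x => f.1 ⟨σ x.1, Set.mem_image_of_mem _ x.2⟩, ?_⟩) ⟨?_, ?_⟩
  · obtain ⟨f, θ, hθ, rfl⟩ := f
    exact ⟨θ * σ, mul_mem hθ hσ, rfl⟩
  · intro f g h
    apply Subtype.ext
    funext y
    obtain ⟨_, x, hx, rfl⟩ := y
    exact congrFun (congrArg Subtype.val h) ⟨x, hx⟩
  · rintro ⟨_, θ, hθ, rfl⟩
    refine ⟨⟨fun x => (θ * σ⁻¹) x.1, θ * σ⁻¹, mul_mem hθ (inv_mem hσ), rfl⟩, ?_⟩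
    apply Subtype.ext
    funext x
    simp

/-- Fix for each `C ∈ G·B` some `s C ∈ G` carrying `B` to `C`. Every element of `G|_B` then has
the form `s C ∘ f` for a unique `C ∈ G·B` and a unique `f ∈ G↺B`. -/
theorem card_restrOn_eq {n : ℕ} (G : Subgroup (Equiv.Perm (Fin n))) (B : Set (Fin n)) :
    Nat.card (RestrOn G B) = Nat.card (SetOrbit G B) * Nat.card (SelfRestr G B) := by
  rw [← Nat.card_prod]
  symm
  choose s hs hsB using fun C : SetOrbit G B => C.2
  have hrange : ∀ θ : Equiv.Perm (Fin n), Set.range (fun x : B => θ x.1) = θ '' B := by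
    intro θ
    ext y
    simp only [Set.mem_range, Subtype.exists, Set.mem_image, exists_prop]
  refine Nat.card_eq_of_bijective
    (fun p => ⟨fun x => s p.1 (p.2.1 x), ?_⟩) ⟨?_, ?_⟩
  · obtain ⟨C, f, τ, hτ, -, rfl⟩ := p
    exact ⟨s C * τ, mul_mem (hs C) hτ, rfl⟩
  · rintro ⟨C, f, τ, hτ, hτB, rfl⟩ ⟨D, g, ρ, hρ, hρB, rfl⟩ h
    have h' : (fun x : B => s C (τ x.1)) = fun x : B => s D (ρ x.1) := congrArg Subtype.val h
    -- The member of the orbit is recovered as the image of the restriction.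
    have hCD : C = D := by
      apply Subtype.ext
      have h1 := hrange (s C * τ)
      have h2 := hrange (s D * ρ)
      simp only [Equiv.Perm.coe_mul, Set.image_comp, hτB, hρB, hsB, Function.comp_apply] at h1 h2
      rw [← h1, ← h2, h']
    subst hCD
    have hf : (fun x : B => τ x.1) = fun x : B => ρ x.1 := by
      funext x
      exact (s C).injective (congrFun h' x)
    simp only [hf]
  · rintro ⟨_, θ, hθ, rfl⟩
    let C : SetOrbit G B := ⟨θ '' B, θ, hθ, rfl⟩
    refine ⟨⟨C, fun x => ((s C)⁻¹ * θ) x.1, (s C)⁻¹ * θ, mul_mem (inv_mem (hs C)) hθ, ?_, rfl⟩, ?_⟩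
    · rw [Equiv.Perm.coe_mul, Set.image_comp]
      change ((s C)⁻¹ : Equiv.Perm (Fin n)) '' C.1 = B
      rw [← hsB C, ← Set.image_comp, ← Equiv.Perm.coe_mul, inv_mul_cancel]
      simp
    · apply Subtype.ext
      funext x
      simp

/-- The blocks are the disjoint union of the orbits of the members of the orbit cut. -/
theorem blocks_bijective {n : ℕ} {G : Subgroup (Equiv.Perm (Fin n))} (P : BlockPartition n G) :
    Function.Bijective (fun p : (i : Fin P.ℓ) × SetOrbit G (P.cut i) =>
      (⟨p.2.1, p.1, p.2.2⟩ : P.blocks)) := by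
  constructor
  · rintro ⟨i, C, σ, hσ, rfl⟩ ⟨j, D, τ, hτ, rfl⟩ h
    have h' : σ '' P.cut i = τ '' P.cut j := congrArg Subtype.val h
    have hij : i = j := by
      refine P.cut_distinct_orbits i j (τ⁻¹ * σ) (mul_mem (inv_mem hτ) hσ) ?_
      rw [Equiv.Perm.coe_mul, Set.image_comp, h', ← Set.image_comp, ← Equiv.Perm.coe_mul,
        inv_mul_cancel]
      simp
    subst hij
    simp only [h']
  · rintro ⟨C, i, hC⟩
    exact ⟨⟨i, C, hC⟩, rfl⟩

/-- The disjoint union of the sets `D^μ`, with the restrictions `μ` grouped by their domain. -/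
def cellEquiv {n : ℕ} (G : Subgroup (Equiv.Perm (Fin n))) (𝓑 : Set (Set (Fin n))) :
    ((μ : Restr n G 𝓑) × μ.1.1) ≃ ((B : 𝓑) × (RestrOn G B.1 × B.1)) where
  toFun c := ⟨⟨c.1.1.1, c.1.2.1⟩, ⟨c.1.1.2, c.1.2.2⟩, c.2⟩
  invFun c := ⟨⟨⟨c.1.1, c.2.1.1⟩, c.1.2, c.2.1.2⟩, c.2.2⟩
  left_inv _ := rfl
  right_inv _ := rfl

/-- The underlying set of `U_{G⋌𝓑}` as a disjoint union of its five kinds of points. -/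
def uptEquiv {n : ℕ} (G : Subgroup (Equiv.Perm (Fin n))) (𝓑 : Set (Set (Fin n))) :
    UPt n G 𝓑 ≃ (Fin n ⊕ Fin n ⊕ Fin n) ⊕ G ⊕ ((μ : Restr n G 𝓑) × μ.1.1) where
  toFun
    | .low i => .inl (.inl i)
    | .up i => .inl (.inr (.inl i))
    | .pt i => .inl (.inr (.inr i))
    | .grp g => .inr (.inl g)
    | .cell μ j => .inr (.inr ⟨μ, j⟩)
  invFun
    | .inl (.inl i) => .low i
    | .inl (.inr (.inl i)) => .up i
    | .inl (.inr (.inr i)) => .pt i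
    | .inr (.inl g) => .grp g
    | .inr (.inr ⟨μ, j⟩) => .cell μ j
  left_inv x := by cases x <;> rfl
  right_inv x := by rcases x with (_ | _ | _) | _ | ⟨_, _⟩ <;> rfl

theorem card_cells {n : ℕ} {G : Subgroup (Equiv.Perm (Fin n))} (P : BlockPartition n G) :
    Nat.card ((μ : Restr n G P.blocks) × μ.1.1) =
      ∑ i : Fin P.ℓ, Nat.card (P.cut i) * Nat.card (SetOrbit G (P.cut i)) ^ 2 *
        Nat.card (SelfRestr G (P.cut i)) := by
  classical
  have := fun i => Fintype.ofFinite (SetOrbit G (P.cut i))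
  have := Fintype.ofFinite P.blocks
  rw [Nat.card_congr (cellEquiv G P.blocks), Nat.card_sigma,
    ← (blocks_bijective P).sum_comp, Fintype.sum_sigma]
  refine Finset.sum_congr rfl fun i _ => ?_
  have hterm : ∀ C : SetOrbit G (P.cut i), Nat.card (RestrOn G C.1 × C.1) =
      Nat.card (SetOrbit G (P.cut i)) * Nat.card (SelfRestr G (P.cut i)) *
        Nat.card (P.cut i) := by
    rintro ⟨_, σ, hσ, rfl⟩
    rw [Nat.card_prod, card_restrOn_image G _ σ hσ, card_restrOn_eq,
      Nat.card_image_of_injective σ.injective]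
  simp only [hterm, Finset.sum_const, Finset.card_univ, smul_eq_mul, ← Nat.card_eq_fintype_card]
  ring

/-- For every subgroup `G` of `S_n` and every block partition `𝓑` for `G`
with orbit cut `{B_1,…,B_ℓ}`, the cardinality of `U_{G⋌𝓑}` equals
`|G| + 3n + Σ_{i=1}^{ℓ} |B_i| · m_i² · |G↺B_i|`, where `m_i = |G·B_i|` and
`G↺B_i = {σ|_{B_i} : σ ∈ G, σ[B_i] = B_i}`. -/
theorem size_of_representation (n : ℕ) (hn : 1 ≤ n) (G : Subgroup (Equiv.Perm (Fin n)))
    (P : BlockPartition n G) :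
    Nat.card (UPt n G P.blocks) =
      Nat.card G + 3 * n +
        ∑ i : Fin P.ℓ,
          Nat.card (P.cut i) *
            (Nat.card {C : Set (Fin n) | ∃ σ ∈ G, (σ : Equiv.Perm (Fin n)) '' P.cut i = C}) ^ 2 *
            Nat.card {f : (P.cut i) → Fin n | ∃ σ ∈ G,
              (σ : Equiv.Perm (Fin n)) '' P.cut i = P.cut i ∧
              f = fun x => (σ : Equiv.Perm (Fin n)) x.1} := by
  have : Finite ((μ : Restr n G P.blocks) × μ.1.1) := inferInstance
  rw [Nat.card_congr (uptEquiv G P.blocks), Nat.card_sum, Nat.card_sum, Nat.card_sum,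
    Nat.card_sum, Nat.card_fin, card_cells P]
  simp only [SetOrbit, SelfRestr]
  ring
end

section
/- Let G be a subgroup of S_n with block partition 𝓑 and orbit cut {B_1,…,B_ℓ}. If the induced permutation group G↺𝓑 on 𝓑 is transitive (so ℓ = 1), then, with N := {σ ∈ G : σ[B] = B for every B ∈ 𝓑}, the cardinality of U_{G⋌𝓑} equals |G| · (1 + 3n/|G| + (|G↺B_1|/|N|) · (|𝓑|·n / |G↺𝓑|)). -/
open Equiv in
/-- `|G| = |N| · |G↺𝓑|`: each coset of the kernel `N` is an element of the induced group. -/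
lemma card_eq_kernel_mul_induced (n : ℕ) (G : Subgroup (Perm (Fin n)))
    (𝓑 : Set (Set (Fin n))) :
    Nat.card {σ : Perm (Fin n) | σ ∈ G ∧ ∀ B ∈ 𝓑, σ '' B = B} *
      Nat.card {F : 𝓑 → Set (Fin n) | ∃ σ ∈ G,
        ∀ B : 𝓑, F B = (σ : Perm (Fin n)) '' (B : Set (Fin n))} = Nat.card G := by
  rw [← Nat.card_prod]
  let ρ : {F : 𝓑 → Set (Fin n) | ∃ σ ∈ G,
        ∀ B : 𝓑, F B = (σ : Perm (Fin n)) '' (B : Set (Fin n))} → Perm (Fin n) :=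
    fun F => F.2.choose
  have hρG : ∀ F, ρ F ∈ G := fun F => F.2.choose_spec.1
  have hρ : ∀ F, ∀ B : 𝓑, F.1 B = ρ F '' (B : Set (Fin n)) := fun F => F.2.choose_spec.2
  refine Nat.card_eq_of_bijective
    (fun p => (⟨ρ p.2 * p.1.1, mul_mem (hρG _) p.1.2.1⟩ : G)) ⟨?_, ?_⟩
  · rintro ⟨⟨σ, hσ, hσB⟩, F⟩ ⟨⟨σ', hσ', hσB'⟩, F'⟩ h
    have h' : ρ F * σ = ρ F' * σ' := congrArg Subtype.val h
    have hF : F = F' := by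
      apply Subtype.ext
      funext B
      rw [hρ F B, hρ F' B]
      conv_lhs => rw [← hσB B B.2]
      conv_rhs => rw [← hσB' B B.2]
      rw [← Set.image_comp, ← Set.image_comp, ← Perm.coe_mul, ← Perm.coe_mul, h']
    subst hF
    have := mul_left_cancel h'
    subst this
    rfl
  · rintro ⟨θ, hθ⟩
    let F : {F : 𝓑 → Set (Fin n) | ∃ σ ∈ G,
        ∀ B : 𝓑, F B = (σ : Perm (Fin n)) '' (B : Set (Fin n))} :=
      ⟨fun B => θ '' B, θ, hθ, fun _ => rfl⟩
    refine ⟨⟨⟨(ρ F)⁻¹ * θ, mul_mem (inv_mem (hρG _)) hθ, fun B hB => ?_⟩, F⟩, ?_⟩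
    · have := hρ F ⟨B, hB⟩
      rw [Perm.coe_mul, Set.image_comp]
      change ((ρ F)⁻¹ : Perm (Fin n)) '' (F.1 ⟨B, hB⟩) = B
      rw [this, ← Set.image_comp, ← Perm.coe_mul]
      simp
    · apply Subtype.ext
      simp

open Equiv in
/-- `|G|_B| = |𝓑| · |G↺B₁|` for every block `B = τ[B₁]`, when `G` permutes the pairwise disjoint
sets in `𝓑` transitively. -/
lemma card_restr_block (n : ℕ) (G : Subgroup (Perm (Fin n))) (𝓑 : Set (Set (Fin n)))
    (hdisj : ∀ C ∈ 𝓑, ∀ D ∈ 𝓑, ∀ x, x ∈ C → x ∈ D → C = D)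
    (hinv : ∀ C ∈ 𝓑, ∀ σ ∈ G, (σ : Perm (Fin n)) '' C ∈ 𝓑)
    (B₁ : Set (Fin n)) (hne : B₁.Nonempty)
    (htr : ∀ C ∈ 𝓑, ∃ σ ∈ G, (σ : Perm (Fin n)) '' B₁ = C)
    (B : Set (Fin n)) (hB : B ∈ 𝓑) :
    Nat.card {f : B → Fin n | ∃ θ ∈ G, f = fun x => θ x.1} =
      Nat.card 𝓑 * Nat.card {f : B₁ → Fin n | ∃ σ ∈ G,
        (σ : Perm (Fin n)) '' B₁ = B₁ ∧ f = fun x => (σ : Perm (Fin n)) x.1} := by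
  rw [← Nat.card_prod]
  symm
  obtain ⟨τ, hτ, hτB⟩ := htr B hB
  choose ρ hρG hρ using fun C : 𝓑 => htr C.1 C.2
  have hmem : ∀ y : B, τ⁻¹ y.1 ∈ B₁ := by
    rintro ⟨y, hy⟩
    rw [← hτB] at hy
    obtain ⟨b, hb, rfl⟩ := hy
    simpa using hb
  refine Nat.card_eq_of_bijective
    (fun p => ⟨fun y => ρ p.1 (p.2.1 ⟨τ⁻¹ y.1, hmem y⟩), ?_⟩) ⟨?_, ?_⟩
  · obtain ⟨C, f, σ, hσ, -, rfl⟩ := p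
    exact ⟨ρ C * σ * τ⁻¹, mul_mem (mul_mem (hρG C) hσ) (inv_mem hτ), rfl⟩
  · rintro ⟨C, f, σ, hσ, hσB, rfl⟩ ⟨C', f', σ', hσ', hσB', rfl⟩ h
    have h' : ∀ b ∈ B₁, ρ C (σ b) = ρ C' (σ' b) := by
      intro b hb
      have hb' : τ b ∈ B := hτB ▸ Set.mem_image_of_mem _ hb
      simpa using congrFun (congrArg Subtype.val h) ⟨τ b, hb'⟩
    have hC : C = C' := by
      obtain ⟨b, hb⟩ := hne
      apply Subtype.ext
      refine hdisj _ C.2 _ C'.2 (ρ C (σ b)) ?_ ?_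
      · rw [← hρ C]
        exact Set.mem_image_of_mem _ (hσB ▸ Set.mem_image_of_mem _ hb)
      · rw [h' b hb, ← hρ C']
        exact Set.mem_image_of_mem _ (hσB' ▸ Set.mem_image_of_mem _ hb)
    subst hC
    refine Prod.ext rfl (Subtype.ext ?_)
    funext b
    exact (ρ C).injective (h' b.1 b.2)
  · rintro ⟨f, θ, hθ, rfl⟩
    let C : 𝓑 := ⟨θ '' B, hinv B hB θ hθ⟩
    refine ⟨⟨C, fun b => ((ρ C)⁻¹ * θ * τ) b.1, (ρ C)⁻¹ * θ * τ,
      mul_mem (mul_mem (inv_mem (hρG C)) hθ) hτ, ?_, rfl⟩, ?_⟩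
    · rw [Perm.coe_mul, Set.image_comp, hτB, Perm.coe_mul, Set.image_comp]
      change ((ρ C)⁻¹ : Perm (Fin n)) '' C.1 = B₁
      rw [← hρ C, ← Set.image_comp, ← Perm.coe_mul]
      simp
    · apply Subtype.ext
      funext y
      simp

/-- The points of `U_{G⋌𝓑}` sorted by kind, with the cells `(j, θ|_B)` grouped by the block `B`. -/
def UPt.equivSum (n : ℕ) (G : Subgroup (Equiv.Perm (Fin n))) (𝓑 : Set (Set (Fin n))) :
    UPt n G 𝓑 ≃ Fin n ⊕ Fin n ⊕ Fin n ⊕ G ⊕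
      (Σ B : 𝓑, B.1 × {f : B.1 → Fin n | ∃ θ ∈ G, f = fun x => θ x.1}) where
  toFun
    | .low i => .inl i
    | .up i => .inr (.inl i)
    | .pt i => .inr (.inr (.inl i))
    | .grp g => .inr (.inr (.inr (.inl g)))
    | .cell μ j => .inr (.inr (.inr (.inr ⟨⟨μ.1.1, μ.2.1⟩, j, ⟨μ.1.2, μ.2.2⟩⟩)))
  invFun
    | .inl i => .low i
    | .inr (.inl i) => .up i
    | .inr (.inr (.inl i)) => .pt i
    | .inr (.inr (.inr (.inl g))) => .grp g
    | .inr (.inr (.inr (.inr c))) => .cell ⟨⟨c.1.1, c.2.2.1⟩, c.1.2, c.2.2.2⟩ c.2.1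
  left_inv x := by cases x <;> rfl
  right_inv x := by rcases x with _ | _ | _ | _ | _ <;> rfl

/-- If all `G|_B` have the same size `k`, there are `n · k` cells, since `𝓑` partitions `T`. -/
lemma card_cells_s2 (n : ℕ) (G : Subgroup (Equiv.Perm (Fin n))) (𝓑 : Set (Set (Fin n)))
    (hpart : ∀ x : Fin n, ∃! C, C ∈ 𝓑 ∧ x ∈ C) (k : ℕ)
    (hk : ∀ B ∈ 𝓑, Nat.card {f : B → Fin n | ∃ θ ∈ G, f = fun x => θ x.1} = k) :
    Nat.card (Σ B : 𝓑, B.1 × {f : B.1 → Fin n | ∃ θ ∈ G, f = fun x => θ x.1}) = n * k := by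
  have hn : Nat.card (Σ B : 𝓑, B.1) = n := by
    refine Eq.trans ?_ (Nat.card_fin n)
    refine Nat.card_eq_of_bijective (fun p : Σ B : 𝓑, B.1 => p.2.1) ⟨?_, ?_⟩
    · rintro ⟨⟨B, hB⟩, x, hx⟩ ⟨⟨C, hC⟩, y, hy⟩ h
      obtain rfl : x = y := h
      obtain rfl := (hpart x).unique ⟨hB, hx⟩ ⟨hC, hy⟩
      rfl
    · intro x
      obtain ⟨C, ⟨hC, hx⟩, -⟩ := hpart x
      exact ⟨⟨⟨C, hC⟩, x, hx⟩, rfl⟩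
  classical
  have : Fintype 𝓑 := Fintype.ofFinite _
  rw [Nat.card_sigma] at hn ⊢
  conv_rhs => rw [← hn, Finset.sum_mul]
  refine Finset.sum_congr rfl fun B _ => ?_
  rw [Nat.card_prod, hk B.1 B.2]

/-- If the induced permutation group `G↺𝓑` on `𝓑` is transitive (so the
orbit cut is a single block `B_1`, i.e. `ℓ = 1`, and the formula below holds for it), then,
with `N = {σ ∈ G : σ[B] = B for all B ∈ 𝓑}`,
`|U_{G⋌𝓑}| = |G| · (1 + 3n/|G| + (|G↺B_1|/|N|) · (|𝓑|·n / |G↺𝓑|))`. -/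
theorem size_transitive_on_blocks (n : ℕ) (hn : 1 ≤ n) (G : Subgroup (Equiv.Perm (Fin n)))
    (P : BlockPartition n G)
    (htrans : ∀ B ∈ P.blocks, ∀ C ∈ P.blocks, ∃ σ ∈ G, (σ : Equiv.Perm (Fin n)) '' B = C) :
    ∀ i : Fin P.ℓ,
      (Nat.card (UPt n G P.blocks) : ℚ) =
        (Nat.card G : ℚ) *
          (1 + 3 * n / (Nat.card G : ℚ) +
            ((Nat.card {f : (P.cut i) → Fin n | ∃ σ ∈ G,
                (σ : Equiv.Perm (Fin n)) '' P.cut i = P.cut i ∧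
                f = fun x => (σ : Equiv.Perm (Fin n)) x.1} : ℚ) /
              (Nat.card {σ : Equiv.Perm (Fin n) | σ ∈ G ∧ ∀ B ∈ P.blocks, σ '' B = B} : ℚ)) *
            ((Nat.card P.blocks : ℚ) * n /
              (Nat.card {F : P.blocks → Set (Fin n) | ∃ σ ∈ G,
                ∀ B : P.blocks, F B = (σ : Equiv.Perm (Fin n)) '' (B : Set (Fin n))} : ℚ))) := by
  intro i
  have hdisj : ∀ C ∈ P.blocks, ∀ D ∈ P.blocks, ∀ x, x ∈ C → x ∈ D → C = D :=
    fun C hC D hD x hxC hxD => (P.partitions x).unique ⟨hC, hxC⟩ ⟨hD, hxD⟩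
  have hinv : ∀ C ∈ P.blocks, ∀ σ ∈ G, (σ : Equiv.Perm (Fin n)) '' C ∈ P.blocks := by
    rintro C ⟨j, θ, hθ, rfl⟩ σ hσ
    exact ⟨j, σ * θ, mul_mem hσ hθ, by rw [Equiv.Perm.coe_mul, Set.image_comp]⟩
  have hcut : P.cut i ∈ P.blocks := ⟨i, 1, one_mem G, by simp⟩
  have hcells := card_cells_s2 n G P.blocks P.partitions _ fun B hB =>
    card_restr_block n G P.blocks hdisj hinv (P.cut i) (P.nonempty_cut i)
      (htrans _ hcut) B hB
  have hG := card_eq_kernel_mul_induced n G P.blocks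
  have hGpos : 0 < Nat.card G := Nat.card_pos
  rw [Nat.card_congr (UPt.equivSum n G P.blocks), Nat.card_sum, Nat.card_sum, Nat.card_sum,
    Nat.card_sum, Nat.card_fin, hcells]
  generalize Nat.card {f : (P.cut i) → Fin n | ∃ σ ∈ G,
    (σ : Equiv.Perm (Fin n)) '' P.cut i = P.cut i ∧
    f = fun x => (σ : Equiv.Perm (Fin n)) x.1} = s
  revert hG
  generalize Nat.card {σ : Equiv.Perm (Fin n) | σ ∈ G ∧ ∀ B ∈ P.blocks, σ '' B = B} = a
  generalize Nat.card {F : P.blocks → Set (Fin n) | ∃ σ ∈ G,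
    ∀ B : P.blocks, F B = (σ : Equiv.Perm (Fin n)) '' (B : Set (Fin n))} = q
  intro hG
  rw [← hG] at hGpos ⊢
  have ha : (a : ℚ) ≠ 0 := by
    rintro h
    simp [Nat.cast_eq_zero.mp h] at hGpos
  have hq : (q : ℚ) ≠ 0 := by
    rintro h
    simp [Nat.cast_eq_zero.mp h] at hGpos
  push_cast
  field_simp
  ring
end

section
/- Let G be a subgroup of S_n with block partition 𝓑 and orbit cut {B_1}. If G is transitive on T = {1,…,n}, then, with N := {σ ∈ G : σ[B] = B for every B ∈ 𝓑}, the cardinality of U_{G⋌𝓑} is at most |G| · (1 + (|G↺B_1|/|N|)·(n + 3)). -/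
/-- The set `G↺B` of restrictions to `B` of those elements of `G` that map `B` onto itself. -/
abbrev BlockStab (n : ℕ) (G : Subgroup (Equiv.Perm (Fin n))) (B : Set (Fin n)) :
    Set (B → Fin n) :=
  {f | ∃ σ ∈ G, (σ : Equiv.Perm (Fin n)) '' B = B ∧ f = fun x => (σ : Equiv.Perm (Fin n)) x.1}

/-- The set `N` of elements of `G` that map every member of `𝓑` onto itself. -/
abbrev BlockKernel (n : ℕ) (G : Subgroup (Equiv.Perm (Fin n))) (𝓑 : Set (Set (Fin n))) :
    Set (Equiv.Perm (Fin n)) :=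
  {σ | σ ∈ G ∧ ∀ B ∈ 𝓑, σ '' B = B}

/-- With a single orbit of blocks, every block is the image of the cut block under an element
of `G`. -/
theorem exists_transversal {n : ℕ} {G : Subgroup (Equiv.Perm (Fin n))}
    (P : BlockPartition n G) (hl : P.ℓ = 1) (i : Fin P.ℓ) :
    ∃ g : P.blocks → Equiv.Perm (Fin n), ∀ C, g C ∈ G ∧ g C '' P.cut i = C.1 := by
  have h : ∀ C : P.blocks, ∃ g ∈ G, (g : Equiv.Perm (Fin n)) '' P.cut i = C.1 := by
    rintro ⟨C, i', σ, hσ, hC⟩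
    have : i' = i := by
      apply Fin.ext
      have := i.2
      have := i'.2
      omega
    subst this
    exact ⟨σ, hσ, hC⟩
  choose g hg hg' using h
  exact ⟨g, fun C => ⟨hg C, hg' C⟩⟩

theorem card_le_blocks_mul {n : ℕ} {G : Subgroup (Equiv.Perm (Fin n))}
    (P : BlockPartition n G) (i : Fin P.ℓ)
    (htrans : ∀ a b : Fin n, ∃ σ ∈ G, (σ : Equiv.Perm (Fin n)) a = b)
    (g : P.blocks → Equiv.Perm (Fin n)) (hg : ∀ C, g C ∈ G ∧ g C '' P.cut i = C.1) :
    n ≤ Nat.card P.blocks * Nat.card (BlockStab n G (P.cut i)) := by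
  obtain ⟨x₀, hx₀⟩ := P.nonempty_cut i
  have hsurj : Function.Surjective
      (fun p : P.blocks × BlockStab n G (P.cut i) => g p.1 (p.2.1 ⟨x₀, hx₀⟩)) := by
    intro y
    obtain ⟨C, ⟨hC, hyC⟩, -⟩ := P.partitions y
    obtain ⟨z, hz, hzy⟩ : y ∈ g ⟨C, hC⟩ '' P.cut i := by
      rw [(hg ⟨C, hC⟩).2]
      exact hyC
    obtain ⟨σ, hσ, hσx⟩ := htrans x₀ z
    -- `σ[B₁]` meets `B₁` in `z`, hence `σ` stabilises the block `B₁`.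
    have hst : σ '' P.cut i = P.cut i :=
      P.isBlock_cut i σ hσ ⟨z, ⟨x₀, hx₀, hσx⟩, hz⟩
    refine ⟨(⟨C, hC⟩, ⟨fun x => σ x.1, σ, hσ, hst, rfl⟩), ?_⟩
    simp only [hσx, hzy]
  have := Nat.card_le_card_of_surjective _ hsurj
  simpa [Nat.card_prod] using this

theorem blocks_mul_card_le {n : ℕ} {G : Subgroup (Equiv.Perm (Fin n))}
    (P : BlockPartition n G) (i : Fin P.ℓ)
    (g : P.blocks → Equiv.Perm (Fin n)) (hg : ∀ C, g C ∈ G ∧ g C '' P.cut i = C.1) :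
    Nat.card P.blocks * Nat.card (BlockKernel n G P.blocks) ≤ Nat.card G := by
  have hcut : P.cut i ∈ P.blocks := ⟨i, 1, G.one_mem, by simp⟩
  have himg : ∀ C, ∀ ν : BlockKernel n G P.blocks, (g C * ν.1) '' P.cut i = C.1 := by
    intro C ν
    rw [Equiv.Perm.coe_mul, Set.image_comp, ν.2.2 _ hcut, (hg C).2]
  rw [← Nat.card_prod]
  refine Nat.card_le_card_of_injective
    (fun p : P.blocks × BlockKernel n G P.blocks =>
      (⟨g p.1 * p.2.1, G.mul_mem (hg p.1).1 p.2.2.1⟩ : G)) ?_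
  rintro ⟨C, ν⟩ ⟨C', ν'⟩ h
  have h' : g C * ν.1 = g C' * ν'.1 := congrArg Subtype.val h
  have hC : C = C' := by
    apply Subtype.ext
    rw [← himg C ν, ← himg C' ν', h']
  subst hC
  have hν : ν = ν' := Subtype.ext (mul_left_cancel h')
  rw [hν]

/-- The triple `(j, C, κ)` with `κ ∈ G↺B₁` is sent to the cell `(j, g_C κ g_B⁻¹|_B)`, where `B`
is the block of `j`; the remaining summands hit the fence, the points and the copy of `G`. -/
theorem exists_surjective_UPt {n : ℕ} {G : Subgroup (Equiv.Perm (Fin n))}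
    (P : BlockPartition n G) (i : Fin P.ℓ)
    (g : P.blocks → Equiv.Perm (Fin n)) (hg : ∀ C, g C ∈ G ∧ g C '' P.cut i = C.1) :
    ∃ F : (Fin n ⊕ Fin n ⊕ Fin n) ⊕ G ⊕ (Fin n × P.blocks × BlockStab n G (P.cut i)) →
      UPt n G P.blocks, Function.Surjective F := by
  have hblk : ∀ j : Fin n, ∃ C : P.blocks, j ∈ C.1 ∧ ∀ C' ∈ P.blocks, j ∈ C' → C' = C.1 := by
    intro j
    obtain ⟨C, ⟨hC, hj⟩, hu⟩ := P.partitions j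
    exact ⟨⟨C, hC⟩, hj, fun C' hC' hj' => hu C' ⟨hC', hj'⟩⟩
  choose blk hmem huniq using hblk
  have hrep : ∀ κ : BlockStab n G (P.cut i), ∃ σ ∈ G,
      κ.1 = fun x => (σ : Equiv.Perm (Fin n)) x.1 :=
    fun κ => ⟨κ.2.choose, κ.2.choose_spec.1, κ.2.choose_spec.2.2⟩
  choose s hsG hs using hrep
  let cellMap : Fin n × P.blocks × BlockStab n G (P.cut i) → UPt n G P.blocks := fun p =>
    .cell ⟨⟨(blk p.1).1, fun x => (g p.2.1 * s p.2.2 * (g (blk p.1))⁻¹) x.1⟩, (blk p.1).2, _,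
      G.mul_mem (G.mul_mem (hg _).1 (hsG _)) (G.inv_mem (hg _).1), rfl⟩ ⟨p.1, hmem p.1⟩
  refine ⟨Sum.elim (Sum.elim .low (Sum.elim .up .pt)) (Sum.elim .grp cellMap), ?_⟩
  rintro (a | a | θ | ⟨⟨⟨B, f⟩, hB, θ, hθ, hf⟩, ⟨j, hj⟩⟩ | a)
  · exact ⟨.inl (.inl a), rfl⟩
  · exact ⟨.inl (.inr (.inl a)), rfl⟩
  · exact ⟨.inr (.inl θ), rfl⟩
  · change B ∈ P.blocks at hB
    change j ∈ B at hj
    dsimp only at hf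
    obtain rfl : B = (blk j).1 := huniq j B hB hj
    subst hf
    have hC : θ '' (blk j).1 ∈ P.blocks := by
      obtain ⟨i', σ, hσ, h⟩ := (blk j).2
      refine ⟨i', θ * σ, G.mul_mem hθ hσ, ?_⟩
      rw [Equiv.Perm.coe_mul, Set.image_comp, h]
    let C : P.blocks := ⟨_, hC⟩
    let τ : Equiv.Perm (Fin n) := (g C)⁻¹ * θ * g (blk j)
    have hτG : τ ∈ G := G.mul_mem (G.mul_mem (G.inv_mem (hg _).1) hθ) (hg _).1
    have hτ : τ '' P.cut i = P.cut i := by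
      have h1 : θ '' (blk j).1 = g C '' P.cut i := (hg C).2.symm
      simp only [τ, Equiv.Perm.coe_mul, Set.image_comp]
      rw [(hg (blk j)).2, h1, ← Set.image_comp, ← Equiv.Perm.coe_mul]
      simp
    let κ : BlockStab n G (P.cut i) := ⟨fun x => τ x.1, τ, hτG, hτ, rfl⟩
    refine ⟨.inr (.inr (j, C, κ)), ?_⟩
    have hfun : (fun x : (blk j).1 => (g C * s κ * (g (blk j))⁻¹) x.1) = fun x => θ x.1 := by
      funext x
      obtain ⟨z, hz, hzx⟩ : x.1 ∈ g (blk j) '' P.cut i := by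
        rw [(hg (blk j)).2]
        exact x.2
      have hsz : τ z = s κ z := congrFun (hs κ) ⟨z, hz⟩
      have : (g (blk j))⁻¹ x.1 = z := by rw [← hzx]; simp
      rw [Equiv.Perm.mul_apply, Equiv.Perm.mul_apply, this, ← hsz]
      simp [τ, hzx]
    simp only [Sum.elim_inr, cellMap]
    congr 3
  · exact ⟨.inl (.inr (.inr a)), rfl⟩

/-- If `G` is transitive on `T = {1,…,n}` and the block partition has
orbit cut `{B_1}` (i.e. `ℓ = 1`), then, with `N = {σ ∈ G : σ[B] = B for all B ∈ 𝓑}`,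
`|U_{G⋌𝓑}| ≤ |G| · (1 + (|G↺B_1|/|N|)·(n + 3))`. -/
theorem size_transitive_bound (n : ℕ) (hn : 1 ≤ n) (G : Subgroup (Equiv.Perm (Fin n)))
    (P : BlockPartition n G) (hl : P.ℓ = 1)
    (htrans : ∀ a b : Fin n, ∃ σ ∈ G, (σ : Equiv.Perm (Fin n)) a = b) :
    ∀ i : Fin P.ℓ,
      (Nat.card (UPt n G P.blocks) : ℚ) ≤
        (Nat.card G : ℚ) *
          (1 +
            ((Nat.card {f : (P.cut i) → Fin n | ∃ σ ∈ G,
                (σ : Equiv.Perm (Fin n)) '' P.cut i = P.cut i ∧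
                f = fun x => (σ : Equiv.Perm (Fin n)) x.1} : ℚ) /
              (Nat.card {σ : Equiv.Perm (Fin n) | σ ∈ G ∧ ∀ B ∈ P.blocks, σ '' B = B} : ℚ)) *
            ((n : ℚ) + 3)) := by
  intro i
  obtain ⟨g, hg⟩ := exists_transversal P hl i
  have h1 := card_le_blocks_mul P i htrans g hg
  have h2 := blocks_mul_card_le P i g hg
  obtain ⟨F, hF⟩ := exists_surjective_UPt P i g hg
  have h3 := Nat.card_le_card_of_surjective F hF
  simp only [Nat.card_sum, Nat.card_prod, Nat.card_fin] at h3
  have hN : 0 < Nat.card (BlockKernel n G P.blocks) := by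
    have : Nonempty (BlockKernel n G P.blocks) := ⟨⟨1, G.one_mem, by simp⟩⟩
    exact Nat.card_pos
  change (Nat.card (UPt n G P.blocks) : ℚ) ≤ (Nat.card G : ℚ) *
    (1 + ((Nat.card (BlockStab n G (P.cut i)) : ℚ) / (Nat.card (BlockKernel n G P.blocks) : ℚ)) *
      ((n : ℚ) + 3))
  generalize Nat.card (BlockKernel n G P.blocks) = N at *
  generalize Nat.card (BlockStab n G (P.cut i)) = k at *
  generalize Nat.card P.blocks = m at *
  generalize Nat.card G = c at *
  have hN' : (0 : ℚ) < N := by exact_mod_cast hN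
  have h1' : (n : ℚ) ≤ m * k := by exact_mod_cast h1
  have h2' : (m : ℚ) ≤ c / N := by
    rw [le_div_iff₀ hN']
    exact_mod_cast h2
  have h3' : (Nat.card (UPt n G P.blocks) : ℚ) ≤ (n + (n + n)) + (c + n * (m * k)) := by
    exact_mod_cast h3
  have h4 : (m : ℚ) * (k * (n + 3)) ≤ c / N * (k * (n + 3)) :=
    mul_le_mul_of_nonneg_right h2' (by positivity)
  calc (Nat.card (UPt n G P.blocks) : ℚ) ≤ (n + (n + n)) + (c + n * (m * k)) := h3'
    _ ≤ c + m * (k * (n + 3)) := by linarith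
    _ ≤ c + c / N * (k * (n + 3)) := by linarith
    _ = c * (1 + k / N * (n + 3)) := by ring
end

section
/- Let G be a subgroup of S_n with block partition 𝓑. Every order-automorphism of U_{G⋌𝓑} maps each of the following five sets onto itself: T, {ℓ_1,…,ℓ_n}, {u_1,…,u_n}, G, and ⋃_{μ ∈ ⋃_{B∈𝓑} G|_B} D^μ. -/
namespace UPt

variable {n : ℕ} {G : Subgroup (Equiv.Perm (Fin n))} {𝓑 : Set (Set (Fin n))}

theorem rank_mono {x y : UPt n G 𝓑} (h : x ≤ y) : x.rank ≤ y.rank := by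
  change Relation.ReflTransGen (UStep n G 𝓑) x y at h
  induction h with
  | refl => exact le_rfl
  | tail _ h2 ih => exact ih.trans h2.rank_lt.le

theorem lt_of_step {x y : UPt n G 𝓑} (h : UStep n G 𝓑 x y) : x < y := by
  refine lt_of_le_of_ne (Relation.ReflTransGen.single h) ?_
  rintro rfl
  exact lt_irrefl _ h.rank_lt

theorem exists_step_of_lt {x y : UPt n G 𝓑} (h : x < y) : ∃ c, UStep n G 𝓑 x c ∧ c ≤ y := by
  rcases Relation.ReflTransGen.cases_head h.le with e | hc
  · exact absurd e h.ne
  · exact hc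

theorem rank_strictMono {x y : UPt n G 𝓑} (h : x < y) : x.rank < y.rank := by
  obtain ⟨c, hc, hcy⟩ := exists_step_of_lt h
  exact hc.rank_lt.trans_le (rank_mono hcy)

/-- Ranks have no gaps: together with `rank_strictMono` this makes `rank` the height function. -/
theorem exists_lt_rank (P : BlockPartition n G) (x : UPt n G P.blocks) (k : ℕ)
    (hx : x.rank = k + 1) : ∃ y, y < x ∧ y.rank = k := by
  cases x with
  | low i => simp [rank] at hx
  | grp θ => simp [rank] at hx
  | up i => exact ⟨.low i, lt_of_step (.fence_eq i), by simp [rank] at hx ⊢; omega⟩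
  | cell μ j => exact ⟨.up j.1, lt_of_step (.up_cell μ j), by simp [rank] at hx ⊢; omega⟩
  | pt j =>
    obtain ⟨B, ⟨hB, hj⟩, -⟩ := P.partitions j
    let μ : Restr n G P.blocks := ⟨⟨B, fun x => x.1⟩, hB, 1, one_mem G, rfl⟩
    exact ⟨.cell μ ⟨j, hj⟩, lt_of_step (.cell_pt μ ⟨j, hj⟩), by simp [rank] at hx ⊢; omega⟩

theorem rank_le_orderIso (P : BlockPartition n G) (Ψ : UPt n G P.blocks ≃o UPt n G P.blocks)
    (k : ℕ) : ∀ x, x.rank = k → k ≤ (Ψ x).rank := by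
  induction k with
  | zero => exact fun _ _ => Nat.zero_le _
  | succ k ih =>
    intro x hx
    obtain ⟨y, hy, hk⟩ := exists_lt_rank P x k hx
    exact (ih y hk).trans_lt (rank_strictMono (Ψ.lt_iff_lt.2 hy))

theorem rank_orderIso (P : BlockPartition n G) (Ψ : UPt n G P.blocks ≃o UPt n G P.blocks)
    (x : UPt n G P.blocks) : (Ψ x).rank = x.rank := by
  refine le_antisymm ?_ (rank_le_orderIso P Ψ _ x rfl)
  simpa using rank_le_orderIso P Ψ.symm _ (Ψ x) rfl

theorem exists_pt_iff (x : UPt n G 𝓑) : (∃ j, x = .pt j) ↔ x.rank = 3 := by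
  cases x <;> simp [rank]

theorem exists_up_iff (x : UPt n G 𝓑) : (∃ i, x = .up i) ↔ x.rank = 1 := by
  cases x <;> simp [rank]

theorem exists_cell_iff (x : UPt n G 𝓑) : (∃ μ j, x = .cell μ j) ↔ x.rank = 2 := by
  cases x with
  | cell μ j => exact ⟨fun _ => rfl, fun _ => ⟨μ, j, rfl⟩⟩
  | _ => simp [rank]

theorem not_grp_lt_rank_one {θ : G} {y : UPt n G 𝓑} (hy : y.rank = 1) : ¬ UPt.grp θ < y := by
  intro h
  obtain ⟨c, hc, hcy⟩ := exists_step_of_lt h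
  cases hc with
  | grp_cell _ μ j _ =>
    have := rank_mono hcy
    simp [rank] at this hy
    omega

theorem exists_low_iff (x : UPt n G 𝓑) :
    (∃ i, x = .low i) ↔ x.rank = 0 ∧ ∃ y, x < y ∧ y.rank = 1 := by
  cases x with
  | low i => exact ⟨fun _ => ⟨rfl, .up i, lt_of_step (.fence_eq i), rfl⟩, fun _ => ⟨i, rfl⟩⟩
  | grp θ =>
    refine ⟨by simp, ?_⟩
    rintro ⟨-, y, hlt, hy⟩
    exact absurd hlt (not_grp_lt_rank_one hy)
  | _ => simp [rank]

theorem exists_grp_iff (x : UPt n G 𝓑) :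
    (∃ θ, x = .grp θ) ↔ x.rank = 0 ∧ ¬ ∃ i, x = .low i := by
  cases x <;> simp [rank]

theorem exists_low_orderIso (P : BlockPartition n G) (Ψ : UPt n G P.blocks ≃o UPt n G P.blocks)
    (x : UPt n G P.blocks) : (∃ i, Ψ x = .low i) ↔ ∃ i, x = .low i := by
  rw [exists_low_iff, exists_low_iff, rank_orderIso, Ψ.surjective.exists]
  simp only [Ψ.lt_iff_lt, rank_orderIso]

theorem image_setOf_eq (Ψ : UPt n G 𝓑 ≃o UPt n G 𝓑) {p : UPt n G 𝓑 → Prop}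
    (h : ∀ x, p (Ψ x) ↔ p x) : Ψ '' {x | p x} = {x | p x} := by
  ext y
  obtain ⟨x, rfl⟩ := Ψ.surjective y
  simp [h]

end UPt

/-- Every order-automorphism of `U_{G⋌𝓑}` maps each of the five sets
`T`, `{ℓ_1,…,ℓ_n}`, `{u_1,…,u_n}`, `G`, and `⋃_μ D^μ` onto itself. -/
theorem automorphism_preserves_levels (n : ℕ) (hn : 1 ≤ n) (G : Subgroup (Equiv.Perm (Fin n)))
    (P : BlockPartition n G) (Ψ : UPt n G P.blocks ≃o UPt n G P.blocks) :
    (⇑Ψ) '' {x : UPt n G P.blocks | ∃ j : Fin n, x = UPt.pt j} =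
      {x : UPt n G P.blocks | ∃ j : Fin n, x = UPt.pt j} ∧
    (⇑Ψ) '' {x : UPt n G P.blocks | ∃ i : Fin n, x = UPt.low i} =
      {x : UPt n G P.blocks | ∃ i : Fin n, x = UPt.low i} ∧
    (⇑Ψ) '' {x : UPt n G P.blocks | ∃ i : Fin n, x = UPt.up i} =
      {x : UPt n G P.blocks | ∃ i : Fin n, x = UPt.up i} ∧
    (⇑Ψ) '' {x : UPt n G P.blocks | ∃ θ : G, x = UPt.grp θ} =
      {x : UPt n G P.blocks | ∃ θ : G, x = UPt.grp θ} ∧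
    (⇑Ψ) '' {x : UPt n G P.blocks | ∃ (μ : Restr n G P.blocks) (j : μ.1.1), x = UPt.cell μ j} =
      {x : UPt n G P.blocks | ∃ (μ : Restr n G P.blocks) (j : μ.1.1), x = UPt.cell μ j} := by
  refine ⟨UPt.image_setOf_eq Ψ fun x => ?_, UPt.image_setOf_eq Ψ (UPt.exists_low_orderIso P Ψ),
    UPt.image_setOf_eq Ψ fun x => ?_, UPt.image_setOf_eq Ψ fun x => ?_,
    UPt.image_setOf_eq Ψ fun x => ?_⟩
  · rw [UPt.exists_pt_iff, UPt.exists_pt_iff, UPt.rank_orderIso]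
  · rw [UPt.exists_up_iff, UPt.exists_up_iff, UPt.rank_orderIso]
  · rw [UPt.exists_grp_iff, UPt.exists_grp_iff, UPt.rank_orderIso, UPt.exists_low_orderIso]
  · rw [UPt.exists_cell_iff, UPt.exists_cell_iff, UPt.rank_orderIso]
end

section
/- For every subgroup G of the symmetric group S_n on T = {1,…,n} there exists a finite partially ordered set U containing T as a subset such that every order-automorphism of U maps T onto itself, the restriction map Ψ ↦ Ψ|_T is a group isomorphism from the automorphism group Aut(U) onto G, and hence the action of Aut(U) on T is exactly the permutation group G. -/
/-!
The poset consists of the antichain `T = Fin n` together with one chain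
`(g, 0) < (g, 1) < ⋯ < (g, n - 1)` for each `g ∈ G`, where `j ∈ T` lies below `(g, i)` exactly
when `j ∈ {g 0, …, g i}`, that is, when `g⁻¹ j ≤ i`. The chain of `g` thus spells out `g` as an
enumeration of `T`.

Each `(g, i)` lies above `g i`, so `T` is the set of minimal elements and is preserved by every
automorphism `Ψ`. On the rest, `Ψ` sends chains to chains, and it preserves the level `i` because a
finite chain is rigid: `Ψ (g, i) = (φ g, i)`. If `p` is the restriction of `Ψ` to `T`, then
`g⁻¹ j ≤ i ↔ (φ g)⁻¹ (p j) ≤ i` for all `i`, so `φ g = p g`; hence `p = φ 1 ∈ G` and `p` determines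
`Ψ` (`exists_eq_translation`). Conversely each `h ∈ G` acts by `j ↦ h j`, `(g, i) ↦ (h g, i)`
(`translation`).
-/

namespace OrderRepresentation

variable {n : ℕ} {G : Subgroup (Equiv.Perm (Fin n))}

/-- The order on `Fin n ⊕ (G × Fin n)`: the points `inl j` form an antichain, the points `inr (g, i)`
form one chain for each `g`, and `inl j` lies below `inr (g, i)` when `j` is among `g 0, …, g i`. -/
def chainLE (G : Subgroup (Equiv.Perm (Fin n))) :
    Fin n ⊕ (G × Fin n) → Fin n ⊕ (G × Fin n) → Prop
  | .inl j, .inl k => j = k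
  | .inl j, .inr (g, i) => (g : Equiv.Perm (Fin n))⁻¹ j ≤ i
  | .inr _, .inl _ => False
  | .inr (g, i), .inr (h, k) => g = h ∧ i ≤ k

theorem isPartialOrder_chainLE : IsPartialOrder _ (chainLE G) where
  refl := by
    rintro (j | ⟨g, i⟩) <;> simp [chainLE]
  trans := by
    rintro (j | ⟨g, i⟩) (j' | ⟨g', i'⟩) (j'' | ⟨g'', i''⟩) h₁ h₂ <;> simp only [chainLE] at *
    · exact h₁.trans h₂
    · exact h₁ ▸ h₂
    · exact h₂.1 ▸ h₁.trans h₂.2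
    · exact ⟨h₁.1.trans h₂.1, h₁.2.trans h₂.2⟩
  antisymm := by
    rintro (j | ⟨g, i⟩) (j' | ⟨g', i'⟩) h₁ h₂ <;> simp only [chainLE] at *
    · rw [h₁]
    · rw [h₁.1, le_antisymm h₁.2 h₂.2]

/-- The automorphism induced by `h ∈ G`: it acts naturally on `Fin n` and by left translation on the
labels of the chains. -/
def translation (h : G) : chainLE G ≃r chainLE G where
  toEquiv := Equiv.sumCongr (h : Equiv.Perm (Fin n))
    (Equiv.prodCongr (Equiv.mulLeft h) (Equiv.refl _))
  map_rel_iff' := by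
    rintro (j | ⟨g, i⟩) (j' | ⟨g', i'⟩) <;> simp [chainLE]

/-- Automorphisms preserve `Fin n`, since it is the set of minimal elements. -/
theorem exists_map_inl (Ψ : chainLE G ≃r chainLE G) (j : Fin n) :
    ∃ k, Ψ (.inl j) = .inl k := by
  rcases hx : Ψ (.inl j) with k | ⟨g, i⟩
  · exact ⟨k, rfl⟩
  · exfalso
    -- `g i` lies below `(g, i) = Ψ j`, so its preimage lies below the minimal element `j`.
    have h₁ : chainLE G (.inl ((g : Equiv.Perm (Fin n)) i)) (Ψ (.inl j)) := by
      rw [hx]; simp [chainLE]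
    obtain ⟨y, hy⟩ := Ψ.surjective (.inl ((g : Equiv.Perm (Fin n)) i))
    rw [← hy, Ψ.map_rel_iff] at h₁
    rcases y with k | y
    · have hk : k = j := h₁
      rw [hk, hx] at hy
      simp at hy
    · exact h₁

theorem exists_map_inr (Ψ : chainLE G ≃r chainLE G) (x : G × Fin n) :
    ∃ y, Ψ (.inr x) = .inr y := by
  rcases hx : Ψ (.inr x) with k | y
  · obtain ⟨l, hl⟩ := exists_map_inl Ψ.symm k
    rw [← hx, RelIso.symm_apply_apply] at hl
    simp at hl
  · exact ⟨y, rfl⟩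

theorem eq_id_of_strictMono {f : Fin n → Fin n} (hf : StrictMono f) (i : Fin n) : f i = i := by
  have hs : Function.Surjective f := Finite.surjective_of_injective hf.injective
  exact congrArg (fun e : Fin n ≃o Fin n => e i)
    (Subsingleton.elim (hf.orderIsoOfSurjective f hs) (OrderIso.refl _))

/-- An automorphism permutes the chains and preserves the position within a chain. -/
theorem exists_map_chain (hn : 1 ≤ n) (Ψ : chainLE G ≃r chainLE G) (g : G) :
    ∃ h : G, ∀ i, Ψ (.inr (g, i)) = .inr (h, i) := by
  choose y hy using fun i => exists_map_inr Ψ (g, i)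
  have hle : ∀ i k, i ≤ k ↔ (y i).1 = (y k).1 ∧ (y i).2 ≤ (y k).2 := by
    intro i k
    have := Ψ.map_rel_iff (a := .inr (g, i)) (b := .inr (g, k))
    rw [hy, hy] at this
    simpa [chainLE] using this.symm
  have hfst : ∀ i k, (y i).1 = (y k).1 := fun i k =>
    (le_total i k).elim (fun h => ((hle i k).1 h).1) (fun h => ((hle k i).1 h).1.symm)
  have hmono : StrictMono fun i => (y i).2 := fun i k hik =>
    lt_of_not_ge fun hge => hik.not_ge ((hle k i).2 ⟨hfst _ _, hge⟩)
  refine ⟨(y ⟨0, hn⟩).1, fun i => ?_⟩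
  rw [hy]
  exact congrArg _ (Prod.ext (hfst _ _) (eq_id_of_strictMono hmono i))

theorem exists_eq_translation (hn : 1 ≤ n) (Ψ : chainLE G ≃r chainLE G) :
    ∃ h : G, Ψ = translation h := by
  choose p hp using exists_map_inl Ψ
  choose φ hφ using exists_map_chain hn Ψ
  have key : ∀ (g : G) (j : Fin n),
      (g : Equiv.Perm (Fin n))⁻¹ j = (φ g : Equiv.Perm (Fin n))⁻¹ (p j) := by
    intro g j
    refine eq_of_forall_ge_iff fun i => ?_
    have := Ψ.map_rel_iff (a := .inl j) (b := .inr (g, i))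
    rw [hp, hφ] at this
    exact this.symm
  have hp' : ∀ (g : G) (j : Fin n),
      p ((g : Equiv.Perm (Fin n)) j) = (φ g : Equiv.Perm (Fin n)) j := by
    intro g j
    have := key g ((g : Equiv.Perm (Fin n)) j)
    rw [Equiv.Perm.eq_inv_iff_eq] at this
    simpa using this.symm
  have hp₁ : ∀ j, p j = (φ 1 : Equiv.Perm (Fin n)) j := fun j => by simpa using hp' 1 j
  have hφ' : ∀ g, φ g = φ 1 * g := by
    intro g
    ext j
    simp [← hp']
  refine ⟨φ 1, RelIso.ext ?_⟩
  rintro (j | ⟨g, i⟩)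
  · rw [hp, hp₁]; rfl
  · rw [hφ, hφ']; rfl

theorem translation_injective : Function.Injective (translation (G := G)) := by
  intro g h hgh
  ext j
  have : (Sum.inl ((g : Equiv.Perm (Fin n)) j) : Fin n ⊕ (G × Fin n)) =
      .inl ((h : Equiv.Perm (Fin n)) j) := congrArg (fun e => e (Sum.inl j)) hgh
  rw [Sum.inl.inj this]

theorem translation_trans (g h : G) :
    (translation g).trans (translation h) = translation (h * g) := by
  refine RelIso.ext ?_
  rintro (j | ⟨k, i⟩)
  · rfl
  · exact congrArg (fun x => Sum.inr (x, i)) (mul_assoc h g k).symm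

end OrderRepresentation

/-- For every subgroup `G` of the symmetric group on `T = {1,…,n}` there
is a finite partially ordered set `U` containing (an embedded copy of) `T` such that every
order-automorphism of `U` maps `T` onto itself and the restriction map `Ψ ↦ Ψ|_T` is a
group isomorphism from `Aut(U)` onto `G`; hence the action of `Aut(U)` on `T` is exactly
the permutation group `G`. -/
theorem exists_order_representation (n : ℕ) (hn : 1 ≤ n)
    (G : Subgroup (Equiv.Perm (Fin n))) :
    ∃ (U : Type) (le : U → U → Prop), IsPartialOrder U le ∧ Finite U ∧
      ∃ ι : Fin n ↪ U,
        (∀ Ψ : le ≃r le, (⇑Ψ) '' (Set.range ι) = Set.range ι) ∧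
        ∃ f : (le ≃r le) → G,
          (∀ (Ψ : le ≃r le) (j : Fin n), Ψ (ι j) = ι ((f Ψ : Equiv.Perm (Fin n)) j)) ∧
          (∀ Ψ Φ : le ≃r le, f (Ψ.trans Φ) = f Φ * f Ψ) ∧
          Function.Bijective f := by
  choose f hf using OrderRepresentation.exists_eq_translation (G := G) hn
  have hf' : ∀ h, f (OrderRepresentation.translation h) = h := fun h =>
    OrderRepresentation.translation_injective (hf _).symm
  refine ⟨_, OrderRepresentation.chainLE G, OrderRepresentation.isPartialOrder_chainLE,
    inferInstance, Function.Embedding.inl, ?_,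
    f, ?_, ?_, ?_, ?_⟩
  · intro Ψ
    rw [hf Ψ]
    ext x
    constructor
    · rintro ⟨_, ⟨j, rfl⟩, rfl⟩
      exact ⟨(f Ψ : Equiv.Perm (Fin n)) j, rfl⟩
    · rintro ⟨j, rfl⟩
      refine ⟨_, ⟨(f Ψ : Equiv.Perm (Fin n))⁻¹ j, rfl⟩, ?_⟩
      exact congrArg Sum.inl (Equiv.apply_symm_apply _ j)
  · intro Ψ j
    exact congrArg (fun e => e (Sum.inl j)) (hf Ψ)
  · intro Ψ Φ
    rw [← hf' (f Φ * f Ψ), ← OrderRepresentation.translation_trans, ← hf, ← hf]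
  · intro Ψ Φ h
    rw [hf Ψ, hf Φ, h]
  · exact fun h => ⟨OrderRepresentation.translation h, hf' h⟩
end

section
/- Let G be a subgroup of S_n with block partition 𝓑. The reflexive-transitive closure of the generating comparabilities in the definition of U_{G⋌𝓑} is antisymmetric; that is, U_{G⋌𝓑} is a partially ordered set (equivalently, the generated relation contains no cycle through two or more distinct elements). -/
/-- The reflexive-transitive closure of the generating comparabilities of
`U_{G⋌𝓑}` is antisymmetric, i.e. `U_{G⋌𝓑}` is a partially ordered set: the generated
relation contains no cycle through two or more distinct elements. -/
theorem generated_order_antisymm (n : ℕ) (hn : 1 ≤ n) (G : Subgroup (Equiv.Perm (Fin n)))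
    (P : BlockPartition n G) :
    ∀ x y : UPt n G P.blocks,
      Relation.ReflTransGen (UStep n G P.blocks) x y →
      Relation.ReflTransGen (UStep n G P.blocks) y x → x = y := by
  -- Every generating comparability raises `UPt.rank`, so two distinct elements cannot each lie
  -- below the other; `UPt.instPartialOrder` records this as antisymmetry of its `≤`, which is by
  -- definition the reflexive-transitive closure.
  intro x y hxy hyx
  exact (UPt.instPartialOrder n G P.blocks).le_antisymm x y hxy hyx
end

section
/- Let G be a subgroup of S_n with block partition 𝓑, and consider the ordered set U_{G⋌𝓑}. For every μ ∈ ⋃_{B∈𝓑} G|_B and every j ∈ dom(μ), the element (j,μ) is the unique upper cover of u_j lying in D^μ; moreover, any two elements (a,μ) and (b,μ) of the same set D^μ have the same set of lower covers in G, namely {θ ∈ G : θ|_{dom(μ)} = μ}. -/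
section Order

variable {n : ℕ} {G : Subgroup (Equiv.Perm (Fin n))} {𝓑 : Set (Set (Fin n))}

theorem UPt.rank_le_of_le {x y : UPt n G 𝓑} (h : x ≤ y) : x.rank ≤ y.rank := by
  change Relation.ReflTransGen (UStep n G 𝓑) x y at h
  induction h with
  | refl => exact le_rfl
  | tail _ h2 ih => exact ih.trans h2.rank_lt.le

theorem UPt.eq_or_exists_step {x y : UPt n G 𝓑} (h : x ≤ y) :
    x = y ∨ ∃ c, x ≤ c ∧ UStep n G 𝓑 c y := by
  rcases Relation.ReflTransGen.cases_tail h with h | ⟨c, hc, hs⟩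
  · exact Or.inl h.symm
  · exact Or.inr ⟨c, hc, hs⟩

theorem UPt.rank_lt_of_lt {x y : UPt n G 𝓑} (h : x < y) : x.rank < y.rank := by
  rcases UPt.eq_or_exists_step h.le with rfl | ⟨c, hc, hs⟩
  · exact absurd h (lt_irrefl _)
  · exact (UPt.rank_le_of_le hc).trans_lt hs.rank_lt

theorem UPt.eq_of_le_of_rank_le {x y : UPt n G 𝓑} (h : x ≤ y) (hr : y.rank ≤ x.rank) : x = y :=
  h.eq_of_not_lt fun hlt => hr.not_gt (UPt.rank_lt_of_lt hlt)

theorem UPt.not_grp_le_up (θ : G) (i : Fin n) :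
    ¬ (UPt.grp θ : UPt n G 𝓑) ≤ UPt.up i := by
  intro h
  rcases UPt.eq_or_exists_step h with h | ⟨c, hc, hs⟩
  · cases h
  · cases hs <;> cases UPt.eq_of_le_of_rank_le hc le_rfl

theorem UPt.lt_cell {x : UPt n G 𝓑} {μ : Restr n G 𝓑} {k : μ.1.1} (h : x < UPt.cell μ k) :
    x ≤ UPt.up k.1 ∨ ∃ θ : G, x ≤ UPt.grp θ ∧
      ∀ y : μ.1.1, μ.1.2 y = (θ : Equiv.Perm (Fin n)) y.1 := by
  rcases UPt.eq_or_exists_step h.le with rfl | ⟨c, hc, hs⟩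
  · exact absurd h (lt_irrefl _)
  · cases hs with
    | up_cell => exact Or.inl hc
    | grp_cell θ _ _ hθ => exact Or.inr ⟨θ, hc, hθ⟩

theorem UPt.up_covBy_cell (μ : Restr n G 𝓑) (j : μ.1.1) :
    (UPt.up j.1 : UPt n G 𝓑) ⋖ UPt.cell μ j := by
  refine ⟨(UStep.up_cell μ j).lt, fun z h1 h2 => ?_⟩
  have h1 := UPt.rank_lt_of_lt h1
  have h2 := UPt.rank_lt_of_lt h2
  simp only [UPt.rank] at h1 h2
  omega

theorem UPt.eq_of_up_lt_cell {μ : Restr n G 𝓑} {i : Fin n} {k : μ.1.1}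
    (h : (UPt.up i : UPt n G 𝓑) < UPt.cell μ k) : k.1 = i := by
  rcases UPt.lt_cell h with h | ⟨θ, h, -⟩
  · cases UPt.eq_of_le_of_rank_le h le_rfl
    rfl
  · cases UPt.eq_of_le_of_rank_le h (Nat.zero_le _)

theorem UPt.grp_covBy_cell_iff (μ : Restr n G 𝓑) (a : μ.1.1) (θ : G) :
    (UPt.grp θ : UPt n G 𝓑) ⋖ UPt.cell μ a ↔
      ∀ x : μ.1.1, μ.1.2 x = (θ : Equiv.Perm (Fin n)) x.1 := by
  constructor
  · intro h
    rcases UPt.lt_cell h.lt with h | ⟨θ', h, hθ'⟩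
    · exact absurd h (UPt.not_grp_le_up θ _)
    · cases UPt.eq_of_le_of_rank_le h le_rfl
      exact hθ'
  · intro h
    refine ⟨(UStep.grp_cell θ μ a h).lt, fun z h1 h2 => ?_⟩
    -- An element strictly between would lie below `u_a` or below a group element.
    rcases UPt.lt_cell h2 with hz | ⟨θ', hz, -⟩
    · exact UPt.not_grp_le_up θ _ (h1.le.trans hz)
    · exact absurd (UPt.rank_lt_of_lt (h1.trans_le hz)) (lt_irrefl 0)

end Order

/-- In `U_{G⋌𝓑}`, for every `μ` and every `j ∈ dom(μ)`, the element
`(j,μ)` is the unique upper cover of `u_j` lying in `D^μ`; moreover any two elements of the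
same `D^μ` have the same lower covers in `G`, namely `{θ ∈ G : θ|_{dom(μ)} = μ}`. -/
theorem covers_in_U (n : ℕ) (hn : 1 ≤ n) (G : Subgroup (Equiv.Perm (Fin n)))
    (P : BlockPartition n G) :
    (∀ (μ : Restr n G P.blocks) (j : μ.1.1),
      (UPt.up j.1 : UPt n G P.blocks) ⋖ UPt.cell μ j ∧
      ∀ k : μ.1.1, (UPt.up j.1 : UPt n G P.blocks) ⋖ UPt.cell μ k → k = j) ∧
    (∀ (μ : Restr n G P.blocks) (a : μ.1.1) (θ : G),
      ((UPt.grp θ : UPt n G P.blocks) ⋖ UPt.cell μ a ↔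
        ∀ x : μ.1.1, μ.1.2 x = (θ : Equiv.Perm (Fin n)) x.1)) ∧
    (∀ (μ : Restr n G P.blocks) (a b : μ.1.1) (θ : G),
      ((UPt.grp θ : UPt n G P.blocks) ⋖ UPt.cell μ a ↔
        (UPt.grp θ : UPt n G P.blocks) ⋖ UPt.cell μ b)) := by
  exact ⟨fun μ j => ⟨UPt.up_covBy_cell μ j,
      fun _ hk => Subtype.ext (UPt.eq_of_up_lt_cell hk.lt)⟩,
    UPt.grp_covBy_cell_iff,
    fun μ a b θ => (UPt.grp_covBy_cell_iff μ a θ).trans (UPt.grp_covBy_cell_iff μ b θ).symm⟩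
end
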